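/- arXiv:1512.07439 — 2 statements merged into one kernel-verified Lean document; each statement's English description precedes it below -/
import Mathlib

section
/- Let B be a noetherian algebra and J a left ideal of B such that B/J is finite dimensional over k. Then J, viewed as a left B-module, is faithful in the following sense: for every finitely generated right B-module X, if X ⊗_B J is finite dimensional, then X is finite dimensional. -/
open TensorProduct MulOpposite

/-- The `k`-subspace of `N ⊗[k] P` spanned by the balancing relations
`(n·b) ⊗ p − n ⊗ (b·p)`, used to define the tensor product `N ⊗_B P` of a right
`B`-module `N` and a left `B`-module `P` over a (noncommutative) `k`-algebra `B`. -/
def balRel (k B : Type) [Field k] [Ring B] [Algebra k B]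
    (N P : Type) [AddCommGroup N] [Module Bᵐᵒᵖ N] [Module k N] [IsScalarTower k Bᵐᵒᵖ N]
    [AddCommGroup P] [Module B P] [Module k P] [IsScalarTower k B P] :
    Submodule k (N ⊗[k] P) :=
  Submodule.span k {x | ∃ (n : N) (b : B) (p : P),
    x = (op b • n) ⊗ₜ[k] p - n ⊗ₜ[k] (b • p)}

/-- The tensor product `N ⊗_B P` of a right `B`-module `N` and a left `B`-module `P`,
realized as the quotient of `N ⊗[k] P` by the balancing relations. -/
abbrev TensorB (k B : Type) [Field k] [Ring B] [Algebra k B]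
    (N P : Type) [AddCommGroup N] [Module Bᵐᵒᵖ N] [Module k N] [IsScalarTower k Bᵐᵒᵖ N]
    [AddCommGroup P] [Module B P] [Module k P] [IsScalarTower k B P] :=
  (N ⊗[k] P) ⧸ balRel k B N P

/-- The map `f ⊗_B P : N ⊗_B P → N' ⊗_B P` induced by a morphism of right `B`-modules
`f : N → N'`. -/
noncomputable def tensorMapB (k B : Type) [Field k] [Ring B] [Algebra k B]
    (N N' P : Type) [AddCommGroup N] [Module Bᵐᵒᵖ N] [Module k N] [IsScalarTower k Bᵐᵒᵖ N]
    [AddCommGroup N'] [Module Bᵐᵒᵖ N'] [Module k N'] [IsScalarTower k Bᵐᵒᵖ N']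
    [AddCommGroup P] [Module B P] [Module k P] [IsScalarTower k B P]
    (f : N →ₗ[Bᵐᵒᵖ] N') : TensorB k B N P →ₗ[k] TensorB k B N' P :=
  Submodule.mapQ _ _ (TensorProduct.map (f.restrictScalars k) LinearMap.id) (by
    rw [balRel, Submodule.span_le]
    rintro _ ⟨n, b, p, rfl⟩
    simp only [SetLike.mem_coe, Submodule.mem_comap, map_sub, TensorProduct.map_tmul,
      LinearMap.coe_restrictScalars, LinearMap.id_coe, id_eq, map_smul]
    exact Submodule.subset_span ⟨f n, b, p, rfl⟩)

/-!
The multiplication map `X ⊗_B J → X` has image `X·J`, so `X·J` is finite-dimensional. If `s₁, …, sₙ`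
generate `X`, then `(b₁, …, bₙ) ↦ s₁·b₁ + ⋯ + sₙ·bₙ` induces a surjection `(B ⧸ J)ⁿ → X ⧸ X·J`, so
`X ⧸ X·J` is finite-dimensional as well.
-/

section RightAction

variable (R B X : Type*) [CommRing R] [Ring B] [Algebra R B]
  [AddCommGroup X] [Module Bᵐᵒᵖ X] [Module R X] [IsScalarTower R Bᵐᵒᵖ X]

/-- The action `(x, b) ↦ x·b` of `B` on a right `B`-module `X`, as an `R`-bilinear map. -/
def opSMulBilin : X →ₗ[R] B →ₗ[R] X :=
  ((Algebra.lsmul R R X).toLinearMap ∘ₗ (opLinearEquiv R : B ≃ₗ[R] Bᵐᵒᵖ).toLinearMap).flip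

variable {R B X}

variable (X) in
/-- The `R`-submodule `X·I` of a right `B`-module `X` generated by the products `x·b` with `b ∈ I`.
It need not be a `B`-submodule, since `I` is not assumed to be a right ideal. -/
def opSMulSubmodule (I : Submodule R B) : Submodule R X :=
  Submodule.map₂ (opSMulBilin R B X) ⊤ I

theorem op_smul_mem_opSMulSubmodule {I : Submodule R B} (x : X) {b : B} (hb : b ∈ I) :
    op b • x ∈ opSMulSubmodule X I :=
  Submodule.apply_mem_map₂ (opSMulBilin R B X) Submodule.mem_top hb

/-- Right multiplication `b ↦ x·b`, as a map `B ⧸ I → X ⧸ X·I`. -/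
def quotientOpSMul (I : Submodule R B) (x : X) : B ⧸ I →ₗ[R] X ⧸ opSMulSubmodule X I :=
  I.mapQ _ (opSMulBilin R B X x) fun _ hb ↦ op_smul_mem_opSMulSubmodule x hb

theorem quotientOpSMul_mkQ (I : Submodule R B) (x : X) (b : B) :
    quotientOpSMul I x (I.mkQ b) = (opSMulSubmodule X I).mkQ (op b • x) := rfl

variable (X) in
theorem finite_quotient_opSMulSubmodule [Module.Finite Bᵐᵒᵖ X] (I : Submodule R B)
    [Module.Finite R (B ⧸ I)] : Module.Finite R (X ⧸ opSMulSubmodule X I) := by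
  obtain ⟨n, s, hs⟩ := Module.Finite.exists_fin (R := Bᵐᵒᵖ) (M := X)
  let φ : (Fin n → B ⧸ I) →ₗ[R] X ⧸ opSMulSubmodule X I :=
    LinearMap.lsum R (fun _ ↦ B ⧸ I) R fun i ↦ quotientOpSMul I (s i)
  have hφ (b : Fin n → Bᵐᵒᵖ) :
      φ (fun i ↦ I.mkQ (b i).unop) = (opSMulSubmodule X I).mkQ (∑ i, b i • s i) := by
    simp [φ, -Submodule.mkQ_apply, quotientOpSMul_mkQ]
  refine Module.Finite.of_surjective φ fun y ↦ ?_
  obtain ⟨x, rfl⟩ := (opSMulSubmodule X I).mkQ_surjective y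
  have hx : x ∈ Submodule.span Bᵐᵒᵖ (Set.range s) := hs ▸ Submodule.mem_top
  obtain ⟨b, rfl⟩ := (Submodule.mem_span_range_iff_exists_fun Bᵐᵒᵖ).mp hx
  exact ⟨_, hφ b⟩

end RightAction

namespace TensorB

variable {k B N P : Type} {M : Type*} [Field k] [Ring B] [Algebra k B]
  [AddCommGroup N] [Module Bᵐᵒᵖ N] [Module k N] [IsScalarTower k Bᵐᵒᵖ N]
  [AddCommGroup P] [Module B P] [Module k P] [IsScalarTower k B P]
  [AddCommGroup M] [Module k M]

/-- The universal property of `N ⊗_B P`: the linear map induced by a `B`-balanced `k`-bilinear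
map. -/
def lift (f : N →ₗ[k] P →ₗ[k] M) (hf : ∀ n (b : B) p, f (op b • n) p = f n (b • p)) :
    TensorB k B N P →ₗ[k] M :=
  (balRel k B N P).liftQ (TensorProduct.lift f) <| by
    rw [balRel, Submodule.span_le]
    rintro _ ⟨n, b, p, rfl⟩
    simp [hf]

theorem range_lift (f : N →ₗ[k] P →ₗ[k] M) (hf : ∀ n (b : B) p, f (op b • n) p = f n (b • p)) :
    LinearMap.range (lift f hf) = Submodule.map₂ f ⊤ ⊤ := by
  rw [lift, Submodule.range_liftQ, LinearMap.range_eq_map,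
    ← TensorProduct.map₂_mk_top_top_eq_top, Submodule.map_map₂]
  rfl

variable (k) (X : Type) [AddCommGroup X] [Module Bᵐᵒᵖ X] [Module k X] [IsScalarTower k Bᵐᵒᵖ X]

/-- The multiplication map `X ⊗_B J → X`, `x ⊗ b ↦ x·b`, of a left ideal `J`. -/
def mulMap (J : Submodule B B) : TensorB k B X J →ₗ[k] X :=
  lift ((opSMulBilin k B X).compl₂ (J.subtype.restrictScalars k)) fun x b p ↦
    (mul_smul (op (p : B)) (op b) x).symm

theorem range_mulMap (J : Submodule B B) :
    LinearMap.range (mulMap k X J) = opSMulSubmodule X (J.restrictScalars k) := by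
  have hJ : Submodule.map (J.subtype.restrictScalars k) ⊤ = J.restrictScalars k := by
    rw [Submodule.map_top, LinearMap.range_restrictScalars, Submodule.range_subtype]
  refine (range_lift _ _).trans ?_
  rw [← Submodule.map₂_map_right, hJ, opSMulSubmodule]

end TensorB

theorem cofinite_left_ideal_faithful_general
    (k B : Type) [Field k] [Ring B] [Algebra k B] (J : Submodule B B)
    (hcofin : FiniteDimensional k (B ⧸ (J.restrictScalars k)))
    (X : Type) [AddCommGroup X] [Module Bᵐᵒᵖ X] [Module k X]
    [IsScalarTower k Bᵐᵒᵖ X] [Module.Finite Bᵐᵒᵖ X]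
    (hX : FiniteDimensional k (TensorB k B X J)) : FiniteDimensional k X := by
  have hquot := finite_quotient_opSMulSubmodule X (J.restrictScalars k)
  have hsub : FiniteDimensional k (opSMulSubmodule X (J.restrictScalars k)) :=
    TensorB.range_mulMap k X J ▸ inferInstance
  exact Module.Finite.of_submodule_quotient (opSMulSubmodule X (J.restrictScalars k))

/-- Let `B` be a noetherian algebra and `J` a left ideal of `B` (a `B`-submodule of `B`)
such that `B/J` is finite-dimensional over `k`.  Then `J`, viewed as a left `B`-module, is
faithful: for every finitely generated right `B`-module `X`, if `X ⊗_B J` is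
finite-dimensional, then `X` is finite-dimensional. -/
theorem cofinite_left_ideal_faithful
    (k B : Type) [Field k] [CharZero k] [Ring B] [Algebra k B]
    [IsNoetherianRing B] [IsNoetherianRing Bᵐᵒᵖ]
    (J : Submodule B B)
    (hcofin : FiniteDimensional k (B ⧸ (J.restrictScalars k))) :
    ∀ (X : Type) [AddCommGroup X] [Module Bᵐᵒᵖ X] [Module k X]
      [IsScalarTower k Bᵐᵒᵖ X] [Module.Finite Bᵐᵒᵖ X],
      FiniteDimensional k (TensorB k B X (↥J)) → FiniteDimensional k X := by
  intro X _ _ _ _ _ hX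
  exact cofinite_left_ideal_faithful_general k B J hcofin X hX
end

section
/- Let H be a finite-dimensional semisimple Hopf algebra, A a noetherian left H-module algebra, B = A#H, and t the idempotent integral of H. If B/(AtA) is finite dimensional (where AtA is the two-sided ideal of B generated by 1#t), then for every finitely generated right B-module M, the largest t-torsion submodule T(M) of M is finite dimensional. -/
open TensorProduct MulOpposite

/-- For a left `H`-module algebra `A`, the action on a fixed element `a ∈ A` as a
`k`-linear map `H →ₗ[k] A`, `h ↦ h • a`. -/
def actL (k H A : Type) [Field k] [Ring H] [Algebra k H] [Ring A] [Algebra k A]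
    [Module H A] [IsScalarTower k H A] (a : A) : H →ₗ[k] A where
  toFun h := h • a
  map_add' h h' := add_smul h h' a
  map_smul' c h := smul_assoc c h a

/-- A right `B`-module `M` is `t`-torsion when `m·(A#t)` is finite-dimensional for every
`m ∈ M`; here the smash product `B = A#H` is presented by a linear isomorphism
`ψ : A ⊗[k] H ≃ B`, and `a#t = ψ (a ⊗ t)`. -/
def IsTTorsion (k H A B : Type) [Field k] [Ring H] [Algebra k H] [Ring A] [Algebra k A]
    [Module H A] [IsScalarTower k H A] [Ring B] [Algebra k B]
    (ψ : (A ⊗[k] H) ≃ₗ[k] B) (t : H)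
    (M : Type) [AddCommGroup M] [Module Bᵐᵒᵖ M] [Module k M] [IsScalarTower k Bᵐᵒᵖ M] :
    Prop :=
  ∀ m : M, FiniteDimensional k
    (Submodule.span k {x | ∃ a : A, x = op (ψ (a ⊗ₜ[k] t)) • m})

/-!
Read right `B`-modules as left modules over `R = Bᵐᵒᵖ` and put `e = op (1 # t)`; then `T(M)`
consists of the `m` for which `e R m` is finite-dimensional. If `R` is left noetherian, then `R e R`
is generated as a left ideal by finitely many `yᵢ ∈ e R`. The map `m ↦ (yᵢ m)ᵢ` sends `T(M)` into a
power of the finite-dimensional space `e T(M)`, and its kernel, being killed by `R e R`, is a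
finitely generated module over the finite-dimensional algebra `R / R e R`.

That `R` is left noetherian follows from `(1 # H) (A # 1) = B`, for which the relation
`(a # 1) (1 # S h) = ∑ (1 # S h₁) (h₂ a # 1)` reduces us to the surjectivity of the antipode `S`.
The latter comes from the Casimir identity `∑ h t₁ ⊗ S t₂ = ∑ t₁ ⊗ S t₂ h`: it shows that
`∑ S t₂ φ(t₁)` lies in `S H` for every `φ` of rank one, hence for all `φ`, and for `φ x = S² x h`
this sum is `S (∑ S t₁ t₂) h = h`.
-/

section FiniteTorsion

variable {k R M V : Type*} [CommRing k] [Ring R] [Algebra k R]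
  [AddCommGroup M] [Module k M] [Module R M] [IsScalarTower k R M]
  [AddCommGroup V] [Module k V]

theorem fg_range_of_forall_fg_map_span_singleton [Module.Finite R M] (f : M →ₗ[k] V)
    (hf : ∀ m : M, (((R ∙ m).restrictScalars k).map f).FG) : (LinearMap.range f).FG := by
  obtain ⟨s, hs⟩ := Module.Finite.fg_top (R := R) (M := M)
  have range_eq : LinearMap.range f = ⨆ m : s, ((R ∙ (m : M)).restrictScalars k).map f := by
    rw [← Submodule.map_iSup, ← Submodule.restrictScalars_iSup, ← Submodule.span_range_eq_iSup,
      Subtype.range_coe, hs, Submodule.restrictScalars_top, LinearMap.range_eq_map]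
  exact range_eq ▸ Submodule.fg_iSup _ fun m => hf m

theorem finite_of_forall_mem_smul_eq_zero [Module.Finite R M] (I : Ideal R)
    [Module.Finite k (R ⧸ I)] (hI : ∀ x ∈ I, ∀ m : M, x • m = 0) : Module.Finite k M := by
  suffices h : (LinearMap.range (LinearMap.id : M →ₗ[k] M)).FG by
    rwa [LinearMap.range_id, ← Module.finite_def] at h
  refine fg_range_of_forall_fg_map_span_singleton (R := R) _ fun m => ?_
  let orbit : (R ⧸ I) →ₗ[R] M :=
    I.liftQ (LinearMap.toSpanSingleton R M m) fun x hx => hI x hx m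
  have range_orbit : LinearMap.range (orbit.restrictScalars k) = (R ∙ m).restrictScalars k := by
    rw [LinearMap.range_restrictScalars]
    exact congrArg _ ((I.range_liftQ _ _).trans (LinearMap.range_toSpanSingleton m))
  rw [Submodule.map_id, ← range_orbit]
  exact Module.Finite.iff_fg.1 inferInstance

variable (k) in
/-- The `k`-submodule `e R m` of a left `R`-module. -/
def smulCyclic (e : R) (m : M) : Submodule k M :=
  ((R ∙ m).restrictScalars k).map (Algebra.lsmul k k M e)

theorem smulCyclic_le_iff {e : R} {m : M} {W : Submodule k M} :
    smulCyclic k e m ≤ W ↔ ∀ b : R, e • b • m ∈ W := by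
  simp [smulCyclic, SetLike.le_def, Submodule.mem_span_singleton]

theorem smul_smul_mem_smulCyclic (e b : R) (m : M) : e • b • m ∈ smulCyclic k e m :=
  smulCyclic_le_iff.1 le_rfl b

variable (k M) in
/-- The largest `e`-torsion submodule of a left `R`-module: the elements `m` such that `e R m` is
finitely generated over the noetherian base ring `k`. -/
def finiteTorsion [IsNoetherianRing k] (e : R) : Submodule R M where
  carrier := {m | (smulCyclic k e m).FG}
  zero_mem' := Submodule.fg_bot.of_le (smulCyclic_le_iff.2 fun b => by simp)
  add_mem' {m n} hm hn := (hm.sup hn).of_le <| smulCyclic_le_iff.2 fun b => by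
    rw [smul_add, smul_add]
    exact Submodule.add_mem_sup (smul_smul_mem_smulCyclic e b m) (smul_smul_mem_smulCyclic e b n)
  smul_mem' c m hm := Submodule.FG.of_le hm <| smulCyclic_le_iff.2 fun b => by
    rw [smul_smul b]
    exact smul_smul_mem_smulCyclic e (b * c) m

theorem mem_finiteTorsion [IsNoetherianRing k] {e : R} {m : M} :
    m ∈ finiteTorsion k M e ↔ (smulCyclic k e m).FG :=
  Iff.rfl

variable (M) in
/-- The submodule of elements of a left `R`-module killed by the two-sided ideal `R e R`. -/
def killedBy (e : R) : Submodule R M where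
  carrier := {m | ∀ b : R, e • b • m = 0}
  zero_mem' b := by rw [smul_zero, smul_zero]
  add_mem' hm hn b := by rw [smul_add, smul_add, hm b, hn b, add_zero]
  smul_mem' c m hm b := by rw [smul_smul b, hm (b * c)]

theorem mem_killedBy_iff {e : R} {m : M} :
    m ∈ killedBy M e ↔ ∀ x ∈ Ideal.span (Set.range (e * ·)), x • m = 0 := by
  have le_ker_iff := Submodule.span_le (R := R) (s := Set.range (e * ·))
    (p := LinearMap.ker (LinearMap.toSpanSingleton R M m))
  simpa [killedBy, SetLike.le_def, Set.range_subset_iff, mul_smul] using le_ker_iff.symm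

-- `Ideal.span (Set.range (e * ·))` is the two-sided ideal `R e R`
variable [IsNoetherianRing R] [Module.Finite R M] (e : R)
  [Module.Finite k (R ⧸ Ideal.span (Set.range (e * ·)))]

theorem finite_killedBy : Module.Finite k (killedBy M e) :=
  have : Module.Finite R (killedBy M e) := .of_fg (IsNoetherian.noetherian _)
  finite_of_forall_mem_smul_eq_zero (Ideal.span (Set.range (e * ·))) fun x hx m =>
    Subtype.ext (mem_killedBy_iff.1 m.2 x hx)

theorem finite_of_forall_fg_smulCyclic [IsNoetherianRing k]
    (h : ∀ m : M, (smulCyclic k e m).FG) : Module.Finite k M := by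
  obtain ⟨s, hse, hs⟩ := (Submodule.fg_span_iff_fg_span_finset_subset (R := R)
    (Set.range (e * ·))).1 (IsNoetherian.noetherian _)
  let Φ : M →ₗ[k] (s → M) := LinearMap.pi fun y => Algebra.lsmul k k M (y : R)
  have range_le : LinearMap.range Φ ≤
      Submodule.pi Set.univ fun _ => LinearMap.range (Algebra.lsmul k k M e) := by
    rintro _ ⟨m, rfl⟩ y -
    obtain ⟨b, hb : e * b = y⟩ := hse y.2
    exact ⟨b • m, by simp [Φ, ← hb]⟩
  have ker_eq : LinearMap.ker Φ = (killedBy M e).restrictScalars k := by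
    ext m
    have le_ker_iff := Submodule.span_le (R := R) (s := s)
      (p := LinearMap.ker (LinearMap.toSpanSingleton R M m))
    rw [Submodule.restrictScalars_mem, mem_killedBy_iff]
    simp only [Ideal.span, hs]
    simpa [Φ, SetLike.le_def, Set.subset_def, funext_iff] using le_ker_iff.symm
  refine ⟨Submodule.fg_of_fg_map_of_fg_inf_ker Φ ?_ ?_⟩
  · rw [← LinearMap.range_eq_map]
    exact (Submodule.fg_pi fun _ => fg_range_of_forall_fg_map_span_singleton (R := R) _ h).of_le
      range_le
  · rw [top_inf_eq, ker_eq]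
    exact Module.Finite.iff_fg.1 (finite_killedBy (k := k) (M := M) e)

theorem finite_finiteTorsion [IsNoetherianRing k] : Module.Finite k (finiteTorsion k M e) := by
  have : Module.Finite R (finiteTorsion k M e) := .of_fg (IsNoetherian.noetherian _)
  refine finite_of_forall_fg_smulCyclic e fun m => ?_
  refine Submodule.fg_of_fg_map_injective ((finiteTorsion k M e).subtype.restrictScalars k)
    Subtype.val_injective ((mem_finiteTorsion.1 m.2).of_le ?_)
  rw [Submodule.map_le_iff_le_comap, smulCyclic_le_iff]
  exact fun b => smul_smul_mem_smulCyclic e b (m : M)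

end FiniteTorsion

section Convolution

open Coalgebra HopfAlgebra LinearMap WithConv

variable {k C H B : Type*} [CommSemiring k] [Semiring B] [Algebra k B]

section Coalgebra

variable [AddCommMonoid C] [Module k C] [Coalgebra k C]

variable (k C) in
/-- The map `c ↦ ε(c) x`, as an element of the convolution algebra `Hom(C, B)`; it turns left and
right multiplication by `x` into convolution. -/
def convConst (x : B) : WithConv (C →ₗ[k] B) :=
  toConv (toSpanSingleton k B x ∘ₗ counit)

theorem convMul_convConst (f : C →ₗ[k] B) (x : B) :
    toConv f * convConst k C x = toConv (mulRight k x ∘ₗ f) := by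
  ext c
  rw [(ℛ k c).convMul_apply]
  have sum_smul_counit := congr(TensorProduct.rid k C $(sum_tmul_counit_eq (ℛ k c)))
  simp only [map_sum, TensorProduct.rid_tmul, one_smul] at sum_smul_counit
  conv_rhs => rw [← sum_smul_counit]
  simp [convConst]

theorem convConst_convMul (f : C →ₗ[k] B) (x : B) :
    convConst k C x * toConv f = toConv (mulLeft k x ∘ₗ f) := by
  ext c
  rw [(ℛ k c).convMul_apply]
  conv_rhs => rw [← sum_counit_smul (ℛ k c)]
  simp [convConst]

end Coalgebra

variable [Semiring H] [HopfAlgebra k H]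

theorem algHom_convMul_comp_antipode (u : H →ₐ[k] B) :
    toConv u.toLinearMap * toConv (u.toLinearMap ∘ₗ antipode k) = 1 := by
  ext h
  rw [(ℛ k h).convMul_apply]
  simpa using congr(u $(sum_mul_antipode_eq_algebraMap_counit (ℛ k h)))

theorem comp_antipode_convMul_algHom (u : H →ₐ[k] B) :
    toConv (u.toLinearMap ∘ₗ antipode k) * toConv u.toLinearMap = 1 := by
  ext h
  rw [(ℛ k h).convMul_apply]
  simpa using congr(u $(sum_antipode_mul_eq_algebraMap_counit (ℛ k h)))

theorem lTensor_antipode_tmul_mul (x y : H) (w : H ⊗[k] H) :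
    (antipode k).lTensor H (x ⊗ₜ[k] y * w) =
      x ⊗ₜ[k] 1 * (antipode k).lTensor H w * 1 ⊗ₜ[k] antipode k y := by
  induction w with
  | zero => simp
  | add w₁ w₂ h₁ h₂ => rw [mul_add, map_add, map_add, h₁, h₂, mul_add, add_mul]
  | tmul a b => simp [antipode_mul_antidistrib]

theorem tmul_one_mul_lTensor_antipode_comul {t : H}
    (ht : ∀ h : H, h * t = counit (R := k) h • t) (h : H) :
    h ⊗ₜ[k] 1 * (antipode k).lTensor H (comul (R := k) t) =
      (antipode k).lTensor H (comul (R := k) t) * 1 ⊗ₜ[k] h := by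
  set z := (antipode k).lTensor H (comul (R := k) t) with z_def
  let i : H →ₐ[k] H ⊗[k] H := Algebra.TensorProduct.includeLeft
  let j : H →ₐ[k] H ⊗[k] H := Algebra.TensorProduct.includeRight
  have adjoint_invariant : toConv (mulRight k z ∘ₗ i.toLinearMap) *
      toConv (j.toLinearMap ∘ₗ antipode k) = convConst k H z := by
    ext h
    have expand := congr((antipode k).lTensor H (comul (R := k) $(ht h)))
    rw [Bialgebra.comul_mul, map_smul, map_smul, ← z_def, ← (ℛ k h).eq, Finset.sum_mul,
      map_sum] at expand
    simp only [lTensor_antipode_tmul_mul, ← z_def] at expand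
    rw [(ℛ k h).convMul_apply]
    exact expand
  have commute : toConv (mulRight k z ∘ₗ i.toLinearMap) =
      toConv (mulLeft k z ∘ₗ j.toLinearMap) := by
    rw [← convConst_convMul, ← adjoint_invariant, mul_assoc, comp_antipode_convMul_algHom, mul_one]
  exact congr(($commute).ofConv h)

end Convolution

section AntipodeSurjective

open Coalgebra HopfAlgebra

/-- The linear map `x ⊗ y ↦ y φ(x)`; evaluated at the Casimir element `∑ t₁ ⊗ S t₂` for varying
`φ` it produces only elements in the image of the antipode `S`. -/
def twistedMul {k H : Type*} [CommSemiring k] [Semiring H] [Algebra k H] (φ : H →ₗ[k] H) :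
    H ⊗[k] H →ₗ[k] H :=
  LinearMap.mul' k H ∘ₗ φ.lTensor H ∘ₗ (TensorProduct.comm k H H).toLinearMap

variable {k H : Type*} [CommRing k] [Ring H] [HopfAlgebra k H]

theorem lid_rTensor_casimir_mul_mem_range_antipode {t : H}
    (ht : ∀ h : H, h * t = counit (R := k) h • t) (f : Module.Dual k H) (g : H) :
    TensorProduct.lid k H
      (f.rTensor H ((antipode k).lTensor H (comul (R := k) t) * 1 ⊗ₜ[k] g)) ∈
      LinearMap.range (antipode k (A := H)) := by
  have pull (w : H ⊗[k] H) : TensorProduct.lid k H (f.rTensor H ((antipode k).lTensor H w)) =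
      antipode k (TensorProduct.lid k H (f.rTensor H w)) := by
    induction w with
    | zero => simp
    | add w₁ w₂ h₁ h₂ => simp only [map_add, h₁, h₂]
    | tmul a b => simp
  have lTensor_tmul_one_mul := lTensor_antipode_tmul_mul (k := k) g 1 (comul (R := k) t)
  rw [antipode_one, ← Algebra.TensorProduct.one_def, mul_one] at lTensor_tmul_one_mul
  rw [← tmul_one_mul_lTensor_antipode_comul ht, ← lTensor_tmul_one_mul, pull]
  exact LinearMap.mem_range_self _ _

theorem twistedMul_mem_range_antipode [Module.Free k H] [Module.Finite k H] {t : H}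
    (ht : ∀ h : H, h * t = counit (R := k) h • t) (φ : H →ₗ[k] H) :
    twistedMul φ ((antipode k).lTensor H (comul (R := k) t)) ∈
      LinearMap.range (antipode k (A := H)) := by
  obtain ⟨w, rfl⟩ := (dualTensorHomEquiv k H H).surjective φ
  induction w with
  | zero => simp [twistedMul]
  | add w₁ w₂ h₁ h₂ => simpa [twistedMul, LinearMap.lTensor_add] using add_mem h₁ h₂
  | tmul f g =>
    have rank_one (w : H ⊗[k] H) : twistedMul (dualTensorHomEquiv k H H (f ⊗ₜ g)) w =
        TensorProduct.lid k H (f.rTensor H (w * 1 ⊗ₜ[k] g)) := by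
      induction w with
      | zero => simp
      | add w₁ w₂ h₁ h₂ => rw [map_add, h₁, h₂, add_mul, map_add, map_add]
      | tmul x y => simp [twistedMul]
    rw [rank_one]
    exact lid_rTensor_casimir_mul_mem_range_antipode ht f g

theorem antipode_surjective [Module.Free k H] [Module.Finite k H] {t : H}
    (ht : ∀ h : H, h * t = counit (R := k) h • t) (ht_counit : counit (R := k) t = 1) :
    Function.Surjective (antipode k (A := H)) := fun h => by
  have twistedMul_lTensor (w : H ⊗[k] H) :
      twistedMul (LinearMap.mulRight k h ∘ₗ antipode k ∘ₗ antipode k) ((antipode k).lTensor H w) =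
        antipode k (LinearMap.mul' k H ((antipode k).rTensor H w)) * h := by
    induction w with
    | zero => simp
    | add w₁ w₂ h₁ h₂ => simp only [map_add, h₁, h₂, add_mul]
    | tmul x y => simp [twistedMul, antipode_mul_antidistrib, mul_assoc]
  have mem_range :=
    twistedMul_mem_range_antipode ht (LinearMap.mulRight k h ∘ₗ antipode k ∘ₗ antipode k)
  rwa [twistedMul_lTensor, mul_antipode_rTensor_comul_apply, ht_counit, map_one, antipode_one,
    one_mul] at mem_range

end AntipodeSurjective

section Noetherian

variable {k R S : Type*} [CommSemiring k] [Ring R] [Algebra k R] [Ring S] [Algebra k S]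

theorem isNoetherianRing_of_range_mul_eq_top [IsNoetherianRing R] (f : R →ₐ[k] S)
    {V : Submodule k S} (hV : V.FG) (h : LinearMap.range f.toLinearMap * V = ⊤) :
    IsNoetherianRing S := by
  let := Module.compHom S f.toRingHom
  have smul_def (r : R) (s : S) : r • s = f r * s := rfl
  have : IsScalarTower R S S := ⟨fun r s₁ s₂ => mul_assoc (f r) s₁ s₂⟩
  have : IsScalarTower k R S := ⟨fun c r s => by simp [smul_def]⟩
  obtain ⟨s, rfl⟩ := hV
  have span_eq_top : Submodule.span R (s : Set S) = ⊤ := by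
    rw [← Submodule.restrictScalars_eq_top_iff k, eq_top_iff, ← h, Submodule.mul_le]
    rintro _ ⟨r, rfl⟩ v hv
    exact Submodule.smul_mem _ r (Submodule.span_le_restrictScalars k R _ hv)
  have : Module.Finite R S := ⟨⟨s, span_eq_top⟩⟩
  exact isNoetherian_of_tower R (isNoetherian_of_isNoetherianRing_of_finite R S)

theorem isNoetherianRing_mulOpposite_of_mul_range_eq_top [IsNoetherianRing Rᵐᵒᵖ] (f : R →ₐ[k] S)
    {V : Submodule k S} (hV : V.FG) (h : V * LinearMap.range f.toLinearMap = ⊤) :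
    IsNoetherianRing Sᵐᵒᵖ := by
  refine isNoetherianRing_of_range_mul_eq_top (AlgHom.op f)
    (hV.map (opLinearEquiv k).toLinearMap) ?_
  have range_op : LinearMap.range (AlgHom.op f).toLinearMap =
      (LinearMap.range f.toLinearMap).map (opLinearEquiv k).toLinearMap := by
    ext x
    simp [MulOpposite.exists, ← unop_injective.eq_iff]
  rw [range_op, ← Submodule.map_op_mul, h, Submodule.map_top, LinearEquiv.range]

end Noetherian

/-- `B` is the smash product `A # H`, where `ψ (a ⊗ h)` is the element `a # h`. Here `A` is only an
`H`-module: the unit and the associativity of `B` force it to be an `H`-module algebra. -/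
structure IsSmashProduct {k H A B : Type} [Field k] [Ring H] [Bialgebra k H] [Ring A]
    [Algebra k A] [Module H A] [IsScalarTower k H A] [Ring B] [Algebra k B]
    (ψ : (A ⊗[k] H) ≃ₗ[k] B) : Prop where
  map_one_tmul_one : ψ (1 ⊗ₜ[k] 1) = 1
  map_tmul_mul_map_tmul (a b : A) (h g : H) : ψ (a ⊗ₜ[k] h) * ψ (b ⊗ₜ[k] g) =
    ψ (TensorProduct.map ((LinearMap.mulLeft k a).comp (actL k H A b))
      (LinearMap.mulRight k g) (Coalgebra.comul h))

namespace IsSmashProduct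

open Coalgebra HopfAlgebra WithConv

variable {k H A B : Type} [Field k] [Ring H] [Ring A] [Algebra k A] [Module H A]
  [Ring B] [Algebra k B]

section Bialgebra

variable [Bialgebra k H] [IsScalarTower k H A] {ψ : (A ⊗[k] H) ≃ₗ[k] B}

/-- The embedding `a ↦ a # 1` of `A` into the smash product. -/
def inl (hψ : IsSmashProduct ψ) : A →ₐ[k] B :=
  AlgHom.ofLinearMap (ψ.toLinearMap ∘ₗ (TensorProduct.mk k A H).flip 1) hψ.map_one_tmul_one
    fun a b => by simp [hψ.map_tmul_mul_map_tmul, Algebra.TensorProduct.one_def, actL]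

theorem map_actL_one_comul (hψ : IsSmashProduct ψ) (h : H) :
    TensorProduct.map (LinearMap.mulLeft k 1 ∘ₗ actL k H A 1) .id (comul h) = 1 ⊗ₜ[k] h := by
  rw [← LinearMap.mulRight_one (R := k)]
  apply ψ.injective
  rw [← hψ.map_tmul_mul_map_tmul, hψ.map_one_tmul_one, mul_one]

/-- The embedding `h ↦ 1 # h` of `H` into the smash product. -/
def inr (hψ : IsSmashProduct ψ) : H →ₐ[k] B :=
  AlgHom.ofLinearMap (ψ.toLinearMap ∘ₗ TensorProduct.mk k A H 1) hψ.map_one_tmul_one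
    fun h g => by
      have expand := congr((LinearMap.mulRight k g).lTensor A $(hψ.map_actL_one_comul h))
      rw [← LinearMap.comp_apply, LinearMap.lTensor_comp_map, LinearMap.comp_id] at expand
      exact (congrArg ψ expand.symm).trans (hψ.map_tmul_mul_map_tmul 1 1 h g).symm

variable (hψ : IsSmashProduct ψ)

theorem inl_apply (a : A) : hψ.inl a = ψ (a ⊗ₜ[k] 1) := rfl

theorem inr_apply (h : H) : hψ.inr h = ψ (1 ⊗ₜ[k] h) := rfl

theorem map_tmul (a : A) (h : H) : ψ (a ⊗ₜ[k] h) = hψ.inl a * hψ.inr h := by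
  simp [inl_apply, inr_apply, hψ.map_tmul_mul_map_tmul, Algebra.TensorProduct.one_def, actL]

theorem inl_convMul_inr (a : A) :
    toConv (hψ.inl.toLinearMap ∘ₗ actL k H A a) * toConv hψ.inr.toLinearMap =
      toConv hψ.inr.toLinearMap * convConst k H (hψ.inl a) := by
  rw [convMul_convConst]
  ext h
  have inr_mul_inl := hψ.map_tmul_mul_map_tmul 1 a h 1
  rw [← hψ.inr_apply, ← hψ.inl_apply, ← (ℛ k h).eq] at inr_mul_inl
  rw [(ℛ k h).convMul_apply]
  simpa [hψ.map_tmul] using inr_mul_inl.symm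

theorem exists_mul_inr_eq {t : H} (ht : ∀ h : H, h * t = counit (R := k) h • t) (b : B) :
    ∃ a : A, b * hψ.inr t = ψ (a ⊗ₜ[k] t) := by
  obtain ⟨w, rfl⟩ := ψ.surjective b
  induction w with
  | zero => exact ⟨0, by simp⟩
  | add w₁ w₂ h₁ h₂ =>
    obtain ⟨⟨a₁, ha₁⟩, a₂, ha₂⟩ := And.intro h₁ h₂
    exact ⟨a₁ + a₂, by rw [map_add, add_mul, ha₁, ha₂, add_tmul, map_add]⟩
  | tmul a h =>
    refine ⟨counit (R := k) h • a, ?_⟩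
    rw [hψ.map_tmul, hψ.map_tmul, mul_assoc, ← map_mul, ht, map_smul, map_smul, mul_smul_comm,
      smul_mul_assoc]

theorem isTTorsion_le_finiteTorsion {t : H} (ht : ∀ h : H, h * t = counit (R := k) h • t)
    {M : Type} [AddCommGroup M] [Module Bᵐᵒᵖ M] [Module k M] [IsScalarTower k Bᵐᵒᵖ M]
    {N : Submodule Bᵐᵒᵖ M} (hN : IsTTorsion k H A B ψ t N) :
    N ≤ finiteTorsion k M (op (hψ.inr t)) := fun m hm => by
  rw [mem_finiteTorsion]
  refine ((Module.Finite.iff_fg.1 (hN ⟨m, hm⟩)).map (N.subtype.restrictScalars k)).of_le ?_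
  rw [smulCyclic_le_iff]
  intro b
  obtain ⟨a, ha⟩ := hψ.exists_mul_inr_eq ht b.unop
  refine ⟨op (ψ (a ⊗ₜ[k] t)) • ⟨m, hm⟩, Submodule.subset_span ⟨a, rfl⟩, ?_⟩
  simp [← ha, mul_smul]

theorem finite_quotient_span_range {t : H}
    (h : FiniteDimensional k
      (B ⧸ Submodule.span k {x | ∃ a b : A, x = ψ (a ⊗ₜ[k] t) * ψ (b ⊗ₜ[k] (1 : H))})) :
    Module.Finite k (Bᵐᵒᵖ ⧸ Ideal.span (Set.range (op (hψ.inr t) * ·))) := by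
  set I := Ideal.span (Set.range (op (hψ.inr t) * ·))
  let mkOp : B →ₗ[k] Bᵐᵒᵖ ⧸ I := I.mkQ.restrictScalars k ∘ₗ (opLinearEquiv k).toLinearMap
  have mkOp_surjective : Function.Surjective mkOp := I.mkQ_surjective.comp op_surjective
  have span_le : Submodule.span k {x | ∃ a b : A, x = ψ (a ⊗ₜ[k] t) * ψ (b ⊗ₜ[k] (1 : H))} ≤
      LinearMap.ker mkOp := by
    rw [Submodule.span_le]
    rintro _ ⟨a, b, rfl⟩
    refine (Submodule.Quotient.mk_eq_zero I).2 ?_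
    rw [hψ.map_tmul, hψ.map_tmul, map_one, mul_one]
    exact I.mul_mem_left (op (hψ.inl b)) (Ideal.subset_span ⟨op (hψ.inl a), rfl⟩)
  refine .of_surjective (Submodule.liftQ _ mkOp span_le) (LinearMap.range_eq_top.1 ?_)
  rw [Submodule.range_liftQ, LinearMap.range_eq_top.2 mkOp_surjective]

end Bialgebra

variable [HopfAlgebra k H] [IsScalarTower k H A] {ψ : (A ⊗[k] H) ≃ₗ[k] B}

theorem inl_mul_inr_antipode_mem (hψ : IsSmashProduct ψ) (a : A) (h : H) :
    hψ.inl a * hψ.inr (antipode k h) ∈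
      LinearMap.range hψ.inr.toLinearMap * LinearMap.range hψ.inl.toLinearMap := by
  have commute : convConst k H (hψ.inl a) * toConv (hψ.inr.toLinearMap ∘ₗ antipode k) =
      toConv (hψ.inr.toLinearMap ∘ₗ antipode k) *
        toConv (hψ.inl.toLinearMap ∘ₗ actL k H A a) := by
    have sandwich := congr(toConv (hψ.inr.toLinearMap ∘ₗ antipode k) * $(hψ.inl_convMul_inr a) *
      toConv (hψ.inr.toLinearMap ∘ₗ antipode k))
    rw [← mul_assoc, ← mul_assoc, comp_antipode_convMul_algHom, one_mul, mul_assoc,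
      algHom_convMul_comp_antipode, mul_one] at sandwich
    exact sandwich.symm
  rw [convConst_convMul] at commute
  have mul_eq : hψ.inl a * hψ.inr (antipode k h) = _ := congr(($commute).ofConv h)
  rw [mul_eq, (ℛ k h).convMul_apply]
  exact sum_mem fun i _ => Submodule.mul_mem_mul ⟨_, rfl⟩ ⟨_, rfl⟩

theorem range_inr_mul_range_inl (hψ : IsSmashProduct ψ)
    (hS : Function.Surjective (antipode k (A := H))) :
    LinearMap.range hψ.inr.toLinearMap * LinearMap.range hψ.inl.toLinearMap = ⊤ := by
  rw [eq_top_iff, ← ψ.range, LinearMap.range_le_iff_comap, eq_top_iff]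
  intro w _
  induction w with
  | zero => exact zero_mem _
  | add w₁ w₂ h₁ h₂ => exact add_mem (h₁ trivial) (h₂ trivial)
  | tmul a h =>
    obtain ⟨g, rfl⟩ := hS h
    rw [Submodule.mem_comap, LinearEquiv.coe_coe, hψ.map_tmul]
    exact hψ.inl_mul_inr_antipode_mem a g

theorem isNoetherianRing_mulOpposite [FiniteDimensional k H] [IsNoetherianRing Aᵐᵒᵖ]
    (hψ : IsSmashProduct ψ) (hS : Function.Surjective (antipode k (A := H))) :
    IsNoetherianRing Bᵐᵒᵖ :=
  isNoetherianRing_mulOpposite_of_mul_range_eq_top hψ.inl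
    (Module.Finite.iff_fg.1 inferInstance) (hψ.range_inr_mul_range_inl hS)

end IsSmashProduct

theorem largest_tTorsion_finiteDimensional_general
    {k H A B : Type} [Field k] [Ring H] [HopfAlgebra k H] [FiniteDimensional k H]
    [Ring A] [Algebra k A] [Module H A] [IsScalarTower k H A] [IsNoetherianRing Aᵐᵒᵖ]
    [Ring B] [Algebra k B] {ψ : (A ⊗[k] H) ≃ₗ[k] B} (hψ : IsSmashProduct ψ)
    {t : H} (htcounit : Coalgebra.counit (R := k) t = 1)
    (htint : ∀ h : H, h * t = (Coalgebra.counit (R := k) h) • t)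
    (hAtA : FiniteDimensional k
      (B ⧸ Submodule.span k {x | ∃ a b : A, x = ψ (a ⊗ₜ[k] t) * ψ (b ⊗ₜ[k] (1 : H))}))
    (M : Type) [AddCommGroup M] [Module Bᵐᵒᵖ M] [Module k M] [IsScalarTower k Bᵐᵒᵖ M]
    [Module.Finite Bᵐᵒᵖ M] :
    FiniteDimensional k
      (sSup {N : Submodule Bᵐᵒᵖ M | IsTTorsion k H A B ψ t N} : Submodule Bᵐᵒᵖ M) := by
  have : IsNoetherianRing Bᵐᵒᵖ :=
    hψ.isNoetherianRing_mulOpposite (antipode_surjective htint htcounit)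
  have := hψ.finite_quotient_span_range hAtA
  have : Module.Finite k (finiteTorsion k M (op (hψ.inr t))) := finite_finiteTorsion _
  have sSup_le_finiteTorsion : sSup {N : Submodule Bᵐᵒᵖ M | IsTTorsion k H A B ψ t N} ≤
      finiteTorsion k M (op (hψ.inr t)) :=
    sSup_le fun N hN => hψ.isTTorsion_le_finiteTorsion htint hN
  exact Module.Finite.of_injective ((Submodule.inclusion sSup_le_finiteTorsion).restrictScalars k)
    (Submodule.inclusion_injective sSup_le_finiteTorsion)

/-- Let `H` be a finite-dimensional semisimple Hopf algebra, `A` a noetherian left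
`H`-module algebra, `B = A#H` and `t` the idempotent integral of `H`.  If `B/(AtA)` is
finite-dimensional, then for every finitely generated right `B`-module `M` the largest
`t`-torsion submodule `T(M)` of `M` (the sum of all `t`-torsion submodules) is
finite-dimensional. -/
theorem largest_tTorsion_finiteDimensional
    (k H A B : Type) [Field k] [CharZero k]
    [Ring H] [HopfAlgebra k H] [FiniteDimensional k H] [IsSemisimpleRing H]
    [Ring A] [Algebra k A] [Module H A] [IsScalarTower k H A]
    [IsNoetherianRing A] [IsNoetherianRing Aᵐᵒᵖ]
    (hsmul_mul : ∀ (h : H) (a b : A), h • (a * b) =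
      (LinearMap.mul' k A) ((TensorProduct.map (actL k H A a) (actL k H A b))
        (Coalgebra.comul h)))
    (hsmul_one : ∀ h : H, h • (1 : A) = (Coalgebra.counit (R := k) h) • (1 : A))
    [Ring B] [Algebra k B] (ψ : (A ⊗[k] H) ≃ₗ[k] B)
    (hψone : ψ ((1 : A) ⊗ₜ[k] (1 : H)) = 1)
    (hψmul : ∀ (a b : A) (h g : H), ψ (a ⊗ₜ[k] h) * ψ (b ⊗ₜ[k] g) =
      ψ ((TensorProduct.map ((LinearMap.mulLeft k a).comp (actL k H A b))
        (LinearMap.mulRight k g)) (Coalgebra.comul h)))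
    (t : H) (htcounit : Coalgebra.counit (R := k) t = 1)
    (htint : ∀ h : H, h * t = (Coalgebra.counit (R := k) h) • t)
    (hAtA : FiniteDimensional k
      (B ⧸ Submodule.span k {x | ∃ a b : A, x = ψ (a ⊗ₜ[k] t) * ψ (b ⊗ₜ[k] (1 : H))})) :
    ∀ (M : Type) [AddCommGroup M] [Module Bᵐᵒᵖ M] [Module k M] [IsScalarTower k Bᵐᵒᵖ M]
      [Module.Finite Bᵐᵒᵖ M],
      FiniteDimensional k
        (sSup {N : Submodule Bᵐᵒᵖ M | IsTTorsion k H A B ψ t N} : Submodule Bᵐᵒᵖ M) := by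
  exact largest_tTorsion_finiteDimensional_general ⟨hψone, hψmul⟩ htcounit htint hAtA
end
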